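/- Let Q be an n×n real symmetric matrix whose minimum and maximum eigenvalues λ_min and λ_max satisfy λ_min ≥ ((n−1)/(n+3))·λ_max. Then f : ℤⁿ → ℝ defined by f(x) = xᵀQx is globally discrete midpoint convex. -/

import Mathlib

open Matrix Classical

/-- The ℓ∞-norm of an integer vector, as a natural number. -/
def linf {n : ℕ} (z : Fin n → ℤ) : ℕ :=
  Finset.univ.sup fun i => (z i).natAbs

/-- Componentwise round-up of (x+y)/2. -/
def avgUp {n : ℕ} (x y : Fin n → ℤ) : Fin n → ℤ :=
  fun i => ⌈((x i + y i : ℚ)) / 2⌉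

/-- Componentwise round-down of (x+y)/2. -/
def avgDown {n : ℕ} (x y : Fin n → ℤ) : Fin n → ℤ :=
  fun i => ⌊((x i + y i : ℚ)) / 2⌋

/-- The real cast of an integer vector. -/
def castVec {n : ℕ} (z : Fin n → ℤ) : Fin n → ℝ := fun i => (z i : ℝ)

/-- The quadratic function `f(x) = xᵀ Q x` on `ℤⁿ`. -/
def quadFn {n : ℕ} (Q : Matrix (Fin n) (Fin n) ℝ) (x : Fin n → ℤ) : ℝ :=
  castVec x ⬝ᵥ Q.mulVec (castVec x)

/-- The real-valued function `f` satisfies discrete midpoint convexity for the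
pair `(x, y)`. -/
def DMCPairR {n : ℕ} (f : (Fin n → ℤ) → ℝ) (x y : Fin n → ℤ) : Prop :=
  f (avgUp x y) + f (avgDown x y) ≤ f x + f y

/-- A real-valued `f` is globally discrete midpoint convex (its effective
domain is all of `ℤⁿ`, which is trivially a discrete midpoint convex set). -/
def GloballyDMCR {n : ℕ} (f : (Fin n → ℤ) → ℝ) : Prop :=
  ∀ x y : Fin n → ℤ, 2 ≤ linf (x - y) → DMCPairR f x y

/-- A real-valued `f` is locally discrete midpoint convex (its effective
domain is all of `ℤⁿ`, which is trivially a discrete midpoint convex set). -/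
def LocallyDMCR {n : ℕ} (f : (Fin n → ℤ) → ℝ) : Prop :=
  ∀ x y : Fin n → ℤ, linf (x - y) = 2 → DMCPairR f x y

/-- The characteristic real vector of the set of indices where `z` is odd. -/
noncomputable def oddChar {n : ℕ} (z : Fin n → ℤ) : Fin n → ℝ :=
  fun i => if Odd (z i) then 1 else 0

/-!
By the parallelogram law, discrete midpoint convexity of `xᵀQx` for `(x, y)` says exactly that
`oᵀQo ≤ zᵀQz`, where `z = x - y` and `o` is the indicator vector of the odd entries of `z`.
Writing `m` and `M` for the extreme eigenvalues, it suffices that `M‖o‖² ≤ m‖z‖²`. When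
`‖z‖∞ ≥ 2`, either some entry of `z` is even and nonzero, so that `‖o‖² ≤ n - 1` and
`‖z‖² ≥ ‖o‖² + 4`, or some odd entry has absolute value at least three, so that `‖o‖² ≤ n` and
`‖z‖² ≥ ‖o‖² + 8`. Hence it is enough that `(n - 1)(M - m) ≤ 4m` and `n(M - m) ≤ 8m`. The first
inequality is the eigenvalue condition. For `n ≥ 2` it implies the second, because
`n ≤ 2(n - 1)`; for `n = 1` the second holds because `M = m`.
-/

section RayleighBounds

variable {ι 𝕜 : Type*} [Fintype ι] [DecidableEq ι] [RCLike 𝕜] {A : Matrix ι ι 𝕜} {c : ℝ}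

open scoped ComplexOrder MatrixOrder

lemma dotProduct_algebraMap_mulVec (c : ℝ) (u v : ι → 𝕜) :
    u ⬝ᵥ algebraMap ℝ (Matrix ι ι 𝕜) c *ᵥ v = (c : 𝕜) * (u ⬝ᵥ v) := by
  rw [Algebra.algebraMap_eq_smul_one, smul_mulVec, one_mulVec, dotProduct_smul,
    RCLike.real_smul_eq_coe_mul]

lemma mul_dotProduct_le_of_le_eigenvalues (hA : A.IsHermitian) (hc : ∀ i, c ≤ hA.eigenvalues i)
    (v : ι → 𝕜) : (c : 𝕜) * (star v ⬝ᵥ v) ≤ star v ⬝ᵥ A *ᵥ v := by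
  have hle : algebraMap ℝ (Matrix ι ι 𝕜) c ≤ A := by
    refine algebraMap_le_of_le_spectrum ?_ hA.isSelfAdjoint
    rw [hA.spectrum_real_eq_range_eigenvalues]
    exact Set.forall_mem_range.mpr hc
  have hnonneg := (Matrix.le_iff.mp hle).dotProduct_mulVec_nonneg v
  rwa [sub_mulVec, dotProduct_sub, sub_nonneg, dotProduct_algebraMap_mulVec] at hnonneg

lemma dotProduct_mulVec_le_of_eigenvalues_le (hA : A.IsHermitian)
    (hc : ∀ i, hA.eigenvalues i ≤ c) (v : ι → 𝕜) :
    star v ⬝ᵥ A *ᵥ v ≤ (c : 𝕜) * (star v ⬝ᵥ v) := by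
  have hle : A ≤ algebraMap ℝ (Matrix ι ι 𝕜) c := by
    refine le_algebraMap_of_spectrum_le ?_ hA.isSelfAdjoint
    rw [hA.spectrum_real_eq_range_eigenvalues]
    exact Set.forall_mem_range.mpr hc
  have hnonneg := (Matrix.le_iff.mp hle).dotProduct_mulVec_nonneg v
  rwa [sub_mulVec, dotProduct_sub, sub_nonneg, dotProduct_algebraMap_mulVec] at hnonneg

end RayleighBounds

lemma dotProduct_mulVec_parallelogram {ι R : Type*} [Fintype ι] [CommRing R] (Q : Matrix ι ι R)
    (a b : ι → R) :
    (a + b) ⬝ᵥ Q *ᵥ (a + b) + (a - b) ⬝ᵥ Q *ᵥ (a - b) =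
      2 * (a ⬝ᵥ Q *ᵥ a + b ⬝ᵥ Q *ᵥ b) := by
  simp only [mulVec_add, mulVec_sub, add_dotProduct, sub_dotProduct, dotProduct_add,
    dotProduct_sub]
  ring

lemma dotProduct_self_add_le {ι R : Type*} [Fintype ι] [CommRing R] [PartialOrder R]
    [IsOrderedRing R] {u v : ι → R} {g : R} {j : ι} (h : ∀ i, u i * u i ≤ v i * v i)
    (hj : u j * u j + g ≤ v j * v j) : u ⬝ᵥ u + g ≤ v ⬝ᵥ v := by
  have hrest : ∑ i ∈ Finset.univ.erase j, u i * u i ≤ ∑ i ∈ Finset.univ.erase j, v i * v i :=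
    Finset.sum_le_sum fun i _ => h i
  calc u ⬝ᵥ u + g = u j * u j + g + ∑ i ∈ Finset.univ.erase j, u i * u i := by
        rw [dotProduct, ← Finset.add_sum_erase _ _ (Finset.mem_univ j), add_right_comm]
    _ ≤ v j * v j + ∑ i ∈ Finset.univ.erase j, v i * v i := add_le_add hj hrest
    _ = v ⬝ᵥ v := Finset.add_sum_erase _ (fun i => v i * v i) (Finset.mem_univ j)

lemma mul_le_mul_of_mul_sub_le {R : Type*} [CommRing R] [PartialOrder R] [IsOrderedRing R]
    {m M k N t g : R} (hm : 0 ≤ m) (hmM : m ≤ M) (hspread : t * (M - m) ≤ g * m) (hkt : k ≤ t)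
    (hkN : k + g ≤ N) : M * k ≤ m * N :=
  calc M * k = m * k + k * (M - m) := by ring
    _ ≤ m * k + t * (M - m) := by gcongr
    _ ≤ m * k + g * m := by gcongr
    _ = m * (k + g) := by ring
    _ ≤ m * N := by gcongr

lemma natCast_mul_sub_le_eight_mul {n : ℕ} {m M : ℝ} (hn : 0 < n) (hmM : m ≤ M)
    (hone : n = 1 → M = m) (hspread : ((n : ℝ) - 1) * (M - m) ≤ 4 * m) :
    (n : ℝ) * (M - m) ≤ 8 * m := by
  obtain rfl | hn2 : n = 1 ∨ 2 ≤ n := by omega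
  · simpa [hone rfl] using hspread
  · have hn2' : (2 : ℝ) ≤ n := by exact_mod_cast hn2
    calc (n : ℝ) * (M - m) ≤ 2 * (n - 1) * (M - m) :=
          mul_le_mul_of_nonneg_right (by linarith) (sub_nonneg.mpr hmM)
      _ ≤ 8 * m := by linarith

section IntegerVectors

variable {n : ℕ}

lemma two_le_linf_iff {z : Fin n → ℤ} : 2 ≤ linf z ↔ ∃ j, 2 ≤ |z j| := by
  simp only [linf, Finset.le_sup_iff (by simp : (⊥ : ℕ) < 2), Finset.mem_univ, true_and,
    Int.abs_eq_natAbs, Nat.ofNat_le_cast]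

lemma avgUp_apply (x y : Fin n → ℤ) (i : Fin n) : avgUp x y i = -(-(x i + y i) / 2) := by
  simpa [avgUp] using Rat.ceil_intCast_div_natCast (x i + y i) 2

lemma avgDown_apply (x y : Fin n → ℤ) (i : Fin n) : avgDown x y i = (x i + y i) / 2 := by
  simpa [avgDown] using Rat.floor_intCast_div_natCast (x i + y i) 2

lemma castVec_add (x y : Fin n → ℤ) : castVec (x + y) = castVec x + castVec y := by
  ext i
  simp [castVec]

lemma castVec_sub (x y : Fin n → ℤ) : castVec (x - y) = castVec x - castVec y := by
  ext i
  simp [castVec]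

lemma oddChar_eq_castVec_emod_two (z : Fin n → ℤ) : oddChar z = castVec fun i => z i % 2 := by
  ext i
  rcases Int.even_or_odd (z i) with h | h
  · simp [oddChar, castVec, Int.not_odd_iff_even.mpr h, Int.even_iff.mp h]
  · simp [oddChar, castVec, h, Int.odd_iff.mp h]

lemma avgUp_add_avgDown (x y : Fin n → ℤ) : avgUp x y + avgDown x y = x + y := by
  ext i
  simp only [Pi.add_apply, avgUp_apply, avgDown_apply]
  omega

lemma castVec_avgUp_sub_avgDown (x y : Fin n → ℤ) :
    castVec (avgUp x y - avgDown x y) = oddChar (x - y) := by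
  rw [oddChar_eq_castVec_emod_two]
  congr 1 with i
  simp only [Pi.sub_apply, avgUp_apply, avgDown_apply]
  omega

lemma oddChar_dotProduct_self (z : Fin n → ℤ) :
    oddChar z ⬝ᵥ oddChar z = (Finset.univ.filter fun i => Odd (z i)).card := by
  simp only [dotProduct, oddChar, mul_ite, mul_one, mul_zero, ← ite_and, and_self,
    Finset.sum_boole]

lemma oddChar_dotProduct_self_le (z : Fin n → ℤ) : oddChar z ⬝ᵥ oddChar z ≤ n := by
  rw [oddChar_dotProduct_self]
  exact_mod_cast card_finset_fin_le _

lemma oddChar_dotProduct_self_le_sub_one {z : Fin n → ℤ} {j : Fin n} (hj : Even (z j)) :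
    oddChar z ⬝ᵥ oddChar z ≤ n - 1 := by
  have hcard : (Finset.univ.filter fun i => Odd (z i)).card < Fintype.card (Fin n) :=
    Finset.card_lt_univ_of_notMem (x := j) (by simpa using hj)
  rw [Fintype.card_fin] at hcard
  rw [oddChar_dotProduct_self, le_sub_iff_add_le]
  exact_mod_cast hcard

lemma oddChar_mul_self_le (z : Fin n → ℤ) (i : Fin n) :
    oddChar z i * oddChar z i ≤ castVec z i * castVec z i := by
  by_cases h : Odd (z i)
  · have hne : z i ≠ 0 := by rintro h0; simp [h0] at h
    have hsq : 1 ≤ z i * z i := Int.add_one_le_iff.mpr (mul_self_pos.mpr hne)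
    simpa [oddChar, castVec, h] using (by exact_mod_cast hsq : (1 : ℝ) ≤ z i * z i)
  · simp [oddChar, castVec, h, mul_self_nonneg]

lemma oddChar_dotProduct_self_add_four_le {z : Fin n → ℤ} {j : Fin n} (hj : 2 ≤ |z j|)
    (heven : Even (z j)) : oddChar z ⬝ᵥ oddChar z + 4 ≤ castVec z ⬝ᵥ castVec z := by
  refine dotProduct_self_add_le (j := j) (oddChar_mul_self_le z) ?_
  have hsq : 4 ≤ z j * z j := by nlinarith [abs_mul_abs_self (z j)]
  simpa [oddChar, castVec, Int.not_odd_iff_even.mpr heven] using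
    (by exact_mod_cast hsq : (4 : ℝ) ≤ z j * z j)

lemma oddChar_dotProduct_self_add_eight_le {z : Fin n → ℤ} {j : Fin n} (hj : 2 ≤ |z j|)
    (hodd : Odd (z j)) : oddChar z ⬝ᵥ oddChar z + 8 ≤ castVec z ⬝ᵥ castVec z := by
  refine dotProduct_self_add_le (j := j) (oddChar_mul_self_le z) ?_
  have habs : 3 ≤ |z j| := by
    obtain ⟨k, hk⟩ := odd_abs.mpr hodd
    omega
  have hsq : 1 + 8 ≤ z j * z j := by nlinarith [abs_mul_abs_self (z j)]
  simpa only [oddChar, castVec, if_pos hodd, one_mul] using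
    (by exact_mod_cast hsq : (1 + 8 : ℝ) ≤ z j * z j)

end IntegerVectors

section QuadraticFunctions

variable {n : ℕ} {Q : Matrix (Fin n) (Fin n) ℝ}

lemma dmcPairR_quadFn_iff {x y : Fin n → ℤ} :
    DMCPairR (quadFn Q) x y ↔
      oddChar (x - y) ⬝ᵥ Q *ᵥ oddChar (x - y) ≤ quadFn Q (x - y) := by
  have hxy := dotProduct_mulVec_parallelogram Q (castVec x) (castVec y)
  have havg := dotProduct_mulVec_parallelogram Q (castVec (avgUp x y)) (castVec (avgDown x y))
  rw [← castVec_add, ← castVec_sub] at hxy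
  rw [← castVec_add, ← castVec_sub, avgUp_add_avgDown, castVec_avgUp_sub_avgDown] at havg
  unfold DMCPairR quadFn
  constructor <;> intro h <;> linarith

theorem globallyDMCR_quadFn_of_rayleigh_bounds {m M : ℝ} (hmM : m ≤ M)
    (hlower : ∀ v, m * (v ⬝ᵥ v) ≤ v ⬝ᵥ Q *ᵥ v) (hupper : ∀ v, v ⬝ᵥ Q *ᵥ v ≤ M * (v ⬝ᵥ v))
    (hspread_even : ((n : ℝ) - 1) * (M - m) ≤ 4 * m) (hspread_odd : (n : ℝ) * (M - m) ≤ 8 * m) :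
    GloballyDMCR (quadFn Q) := by
  intro x y hxy
  obtain ⟨j, hj⟩ := two_le_linf_iff.mp hxy
  have hm : 0 ≤ m := by
    have : 0 ≤ (n : ℝ) * (M - m) := mul_nonneg n.cast_nonneg (sub_nonneg.mpr hmM)
    linarith
  have hnorm : M * (oddChar (x - y) ⬝ᵥ oddChar (x - y)) ≤
      m * (castVec (x - y) ⬝ᵥ castVec (x - y)) := by
    rcases Int.even_or_odd ((x - y) j) with heven | hodd
    · exact mul_le_mul_of_mul_sub_le hm hmM hspread_even (oddChar_dotProduct_self_le_sub_one heven)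
        (oddChar_dotProduct_self_add_four_le hj heven)
    · exact mul_le_mul_of_mul_sub_le hm hmM hspread_odd (oddChar_dotProduct_self_le _)
        (oddChar_dotProduct_self_add_eight_le hj hodd)
  exact dmcPairR_quadFn_iff.mpr ((hupper _).trans (hnorm.trans (hlower _)))

end QuadraticFunctions

/-- If the minimum eigenvalue of the real symmetric matrix `Q` is at least
`((n−1)/(n+3))` times its maximum eigenvalue, then `f(x) = xᵀQx` is globally
discrete midpoint convex. -/
theorem quad_globallyDMC_of_eigenvalue_ratio {n : ℕ} (hn : 0 < n)
    (Q : Matrix (Fin n) (Fin n) ℝ) (hQ : Q.IsHermitian)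
    (heig : ((n : ℝ) - 1) / ((n : ℝ) + 3) * (⨆ i, hQ.eigenvalues i) ≤
      ⨅ i, hQ.eigenvalues i) :
    GloballyDMCR (quadFn Q) := by
  have hmin (i : Fin n) : ⨅ i, hQ.eigenvalues i ≤ hQ.eigenvalues i :=
    ciInf_le (Set.finite_range _).bddBelow i
  have hmax (i : Fin n) : hQ.eigenvalues i ≤ ⨆ i, hQ.eigenvalues i :=
    le_ciSup (Set.finite_range _).bddAbove i
  have hmM := (hmin ⟨0, hn⟩).trans (hmax ⟨0, hn⟩)
  have hspread_even : ((n : ℝ) - 1) * ((⨆ i, hQ.eigenvalues i) - ⨅ i, hQ.eigenvalues i) ≤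
      4 * ⨅ i, hQ.eigenvalues i := by
    rw [div_mul_eq_mul_div, div_le_iff₀ (by positivity)] at heig
    linarith
  refine globallyDMCR_quadFn_of_rayleigh_bounds hmM
    (by simpa using mul_dotProduct_le_of_le_eigenvalues hQ hmin)
    (by simpa using dotProduct_mulVec_le_of_eigenvalues_le hQ hmax) hspread_even ?_
  refine natCast_mul_sub_le_eight_mul hn hmM ?_ hspread_even
  rintro rfl
  rw [ciSup_unique, ciInf_unique]
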